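/- arXiv:1802.01728 — 3 statements merged into one kernel-verified Lean document; each statement's English description precedes it below -/
import Mathlib

section
/- Let f be a measurable function on I=(0,∞) whose decreasing rearrangement f* with respect to Lebesgue measure satisfies lim_{t→∞} f*(t) = α for some α > 0. Then for every ε > 0 there exists a measurable, surjective, Lebesgue-measure-preserving transformation τ : (0,∞) → (0,∞) such that |f(t)| ≤ (1+ε)·f*(τ(t)) for almost every t ∈ (0,∞). -/
open MeasureTheory Set Filter
open scoped ENNReal

/-- The interval `(0, a)` for `a : ℝ≥0∞` (equals `(0,∞)` when `a = ∞`). -/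
def Iset (a : ℝ≥0∞) : Set ℝ := {x : ℝ | 0 < x ∧ ENNReal.ofReal x < a}

/-- Lebesgue measure restricted to the interval `(0,a)`. -/
noncomputable def volI (a : ℝ≥0∞) : Measure ℝ := volume.restrict (Iset a)

/-- Decreasing rearrangement of an `ℝ≥0∞`-valued function with respect to a measure `μ`:
`f^{*,μ}(t) = inf {s > 0 : μ({f > s}) ≤ t}`. -/
noncomputable def rearrE (μ : Measure ℝ) (f : ℝ → ℝ≥0∞) (t : ℝ) : ℝ≥0∞ :=
  sInf {s : ℝ≥0∞ | 0 < s ∧ μ {x | s < f x} ≤ ENNReal.ofReal t}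

/-- Decreasing rearrangement of a real function with respect to a measure `μ` on `ℝ`:
`f^{*,μ}(t) = inf {s > 0 : μ({|f| > s}) ≤ t}`. -/
noncomputable def rearr (μ : Measure ℝ) (f : ℝ → ℝ) (t : ℝ) : ℝ≥0∞ :=
  rearrE μ (fun x => ENNReal.ofReal |f x|) t

/-- The measure `w·dm` on the set `I`. -/
noncomputable def wMeas (I : Set ℝ) (w : ℝ → ℝ) : Measure ℝ :=
  (volume.restrict I).withDensity (fun t => ENNReal.ofReal (w t))

/-- `W(t) = ∫₀ᵗ w dm`. -/
noncomputable def Wfun (w : ℝ → ℝ) (t : ℝ) : ℝ := ∫ s in Set.Ioo (0:ℝ) t, w s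

/-- `b = ∫_I w dm` as an extended real number. -/
noncomputable def bval (a : ℝ≥0∞) (w : ℝ → ℝ) : ℝ≥0∞ := ∫⁻ x in Iset a, ENNReal.ofReal (w x)

/-- Lebesgue measure on `(0,∞)`. -/
noncomputable abbrev muP : Measure ℝ := volume.restrict (Set.Ioi (0:ℝ))

/-- Distribution function of a set. -/
noncomputable def FB (B : Set ℝ) (t : ℝ) : ℝ := (muP (B ∩ Iio t)).toReal

lemma muP_Iio (t : ℝ) : muP (Iio t) = ENNReal.ofReal t := by
  rw [Measure.restrict_apply measurableSet_Iio, inter_comm, Ioi_inter_Iio, Real.volume_Ioo]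
  simp

lemma muP_fin (B : Set ℝ) (t : ℝ) : muP (B ∩ Iio t) ≠ ∞ := by
  refine ne_top_of_le_ne_top ?_ (measure_mono inter_subset_right)
  rw [muP_Iio]; exact ENNReal.ofReal_ne_top

lemma FB_mono (B : Set ℝ) : Monotone (FB B) := by
  intro x y hxy
  exact ENNReal.toReal_mono (muP_fin B y)
    (measure_mono (inter_subset_inter_right _ (Iio_subset_Iio hxy)))

lemma FB_cont (B : Set ℝ) : Continuous (FB B) := by
  have h : LipschitzWith 1 (FB B) := by
    apply LipschitzWith.of_le_add
    intro x y
    rcases le_total x y with h | h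
    · have := FB_mono B h
      have := dist_nonneg (x := x) (y := y)
      linarith
    · have h1 : muP (B ∩ Iio x) ≤ muP (B ∩ Iio y) + ENNReal.ofReal (x - y) := by
        have hs : B ∩ Iio x ⊆ (B ∩ Iio y) ∪ Ico y x := by
          rintro z ⟨hz, hz'⟩
          rcases lt_or_ge z y with h | h
          · exact Or.inl ⟨hz, h⟩
          · exact Or.inr ⟨h, hz'⟩
        refine (measure_mono hs).trans ((measure_union_le _ _).trans ?_)
        gcongr
        exact (Measure.restrict_apply_le _ _).trans (by rw [Real.volume_Ico])
      have h2 := ENNReal.toReal_mono (by finiteness [muP_fin B y]) h1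
      rw [ENNReal.toReal_add (muP_fin B y) ENNReal.ofReal_ne_top,
        ENNReal.toReal_ofReal (by linarith)] at h2
      rw [Real.dist_eq, abs_of_nonneg (by linarith)]
      exact h2
  exact h.continuous

lemma FB_zero (B : Set ℝ) : FB B 0 = 0 := by
  have : muP (B ∩ Iio 0) = 0 := by
    apply measure_mono_null inter_subset_right
    rw [muP_Iio]; simp
  simp [FB, this]

lemma fill (B : Set ℝ) (b : ℝ) (hb : 0 < b) (hB : ENNReal.ofReal b ≤ muP B) :
    muP (B ∩ {t | FB B t < b}) = ENNReal.ofReal b := by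
  by_cases hex : ∃ t, b ≤ FB B t
  · obtain ⟨t0, ht0⟩ := hex
    set S : Set ℝ := {t | b ≤ FB B t} with hS
    have hSc : IsClosed S := isClosed_le continuous_const (FB_cont B)
    have hSb : BddBelow S := by
      refine ⟨0, fun t ht => ?_⟩
      by_contra hlt
      push Not at hlt
      have := FB_mono B hlt.le
      rw [FB_zero] at this
      have ht' : b ≤ FB B t := ht
      linarith
    have hmem : sInf S ∈ S := hSc.csInf_mem ⟨t0, ht0⟩ hSb
    have hset : {t | FB B t < b} = Iio (sInf S) := by
      ext t
      simp only [mem_ofPred_eq, mem_Iio]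
      constructor
      · intro h
        by_contra hc
        push Not at hc
        have := FB_mono B hc
        have hm : b ≤ FB B (sInf S) := hmem
        linarith
      · intro h
        have := notMem_of_lt_csInf h hSb
        simpa [hS] using this
    obtain ⟨s', hs'⟩ : b ∈ range (FB B) :=
      mem_range_of_exists_le_of_exists_ge (FB_cont B) ⟨0, by rw [FB_zero]; exact hb.le⟩ ⟨t0, ht0⟩
    have h1 : FB B (sInf S) = b := by
      apply le_antisymm _ hmem
      rw [← hs']
      exact FB_mono B (csInf_le hSb hs'.ge)
    rw [hset, ← h1, FB, ENNReal.ofReal_toReal (muP_fin _ _)]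
  · push Not at hex
    have : {t | FB B t < b} = univ := by ext t; simp [hex t]
    rw [this, inter_univ]
    apply le_antisymm _ hB
    have hU : B = ⋃ n : ℕ, B ∩ Iio (n:ℝ) := by
      rw [← inter_iUnion]
      ext x
      simp only [mem_inter_iff, mem_iUnion, mem_Iio]
      exact ⟨fun h => ⟨h, exists_nat_gt x⟩, fun h => h.1⟩
    have hm : Monotone fun n : ℕ => B ∩ Iio (n:ℝ) := by
      intro m n hmn
      exact inter_subset_inter_right _ (Iio_subset_Iio (by exact_mod_cast hmn))
    rw [hU, hm.measure_iUnion]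
    apply iSup_le
    intro n
    rw [← ENNReal.ofReal_toReal (muP_fin B n)]
    exact ENNReal.ofReal_le_ofReal (hex n).le

/-- measure of super-level sets of the index. -/
noncomputable def Dk (k : ℝ → ℕ) (n : ℕ) : ℝ≥0∞ := muP {x | n ≤ k x}

/-- The basic map. -/
noncomputable def tau0 (k : ℝ → ℕ) (t : ℝ) : ℝ :=
  (Dk k (k t + 1)).toReal + FB {x | k x = k t} t

lemma Dk_anti (k : ℝ → ℕ) : Antitone (Dk k) := by
  intro m n h
  apply measure_mono
  intro x (hx : n ≤ k x)
  exact h.trans hx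

lemma Dk_fin (k : ℝ → ℕ) (h1 : Dk k 1 ≠ ∞) (n : ℕ) : Dk k (n+1) ≠ ∞ :=
  ne_top_of_le_ne_top h1 (Dk_anti k (by omega))

lemma tau0_meas (k : ℝ → ℕ) (hk : Measurable k) : Measurable (tau0 k) := by
  have h : Measurable (fun p : ℝ × ℕ => (Dk k (p.2 + 1)).toReal + FB {x | k x = p.2} p.1) := by
    apply measurable_from_prod_countable_left
    intro n
    exact (FB_mono {x | k x = n}).measurable.const_add (Dk k (n + 1)).toReal
  exact h.comp (measurable_id.prodMk hk)

lemma Dk_split (k : ℝ → ℕ) (hk : Measurable k) (n : ℕ) :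
    Dk k n = Dk k (n+1) + muP {x | k x = n} := by
  unfold Dk
  rw [← measure_union]
  · congr 1
    ext x
    simp only [mem_ofPred_eq, mem_union]
    omega
  · rw [Set.disjoint_left]
    intro x (hx : n + 1 ≤ k x) (hx' : k x = n)
    omega
  · exact hk (measurableSet_singleton n)

lemma tau0_le (k : ℝ → ℕ) (hk : Measurable k) (h1 : Dk k 1 ≠ ∞) (t : ℝ) (n : ℕ)
    (hn : k t = n + 1) : tau0 k t ≤ (Dk k (n+1)).toReal := by
  have hf := Dk_fin k h1
  have hs := Dk_split k hk (n+1)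
  have hB : muP {x | k x = n+1} ≠ ∞ := by
    refine ne_top_of_le_ne_top (hf n) ?_
    rw [hs]; exact le_add_self
  rw [hs, ENNReal.toReal_add (hf _) hB, tau0, hn]
  gcongr
  exact ENNReal.toReal_mono hB (measure_mono inter_subset_left)

lemma tau0_meas_Iio (k : ℝ → ℕ) (hk : Measurable k) (h1 : Dk k 1 ≠ ∞) (a : ℝ) (ha : 0 < a) :
    muP (tau0 k ⁻¹' Iio a) = ENNReal.ofReal a := by
  have hf := Dk_fin k h1
  have hlim : Tendsto (Dk k) atTop (nhds 0) := by
    have h := tendsto_measure_iInter_atTop (μ := muP) (s := fun n : ℕ => {x | n ≤ k x})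
      (fun n => (hk measurableSet_Ici).nullMeasurableSet)
      (fun m n h x (hx : n ≤ k x) => h.trans hx) ⟨1, h1⟩
    have he : (⋂ n : ℕ, {x | n ≤ k x}) = ∅ := by
      ext x
      simp only [mem_iInter, mem_ofPred_eq, mem_empty_iff_false, iff_false, not_forall, not_le]
      exact ⟨k x + 1, by omega⟩
    rw [he, measure_empty] at h
    exact h
  have hex : ∃ n, Dk k (n+1) < ENNReal.ofReal a := by
    have := (hlim.eventually_lt_const (ENNReal.ofReal_pos.2 ha))
    obtain ⟨N, hN⟩ := (eventually_atTop.1 this)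
    exact ⟨N, hN _ (by omega)⟩
  classical
  obtain ⟨n, hn, hmin⟩ : ∃ n, Dk k (n+1) < ENNReal.ofReal a ∧ ENNReal.ofReal a ≤ Dk k n := by
    refine ⟨Nat.find hex, Nat.find_spec hex, ?_⟩
    rcases h : Nat.find hex with _ | m
    · have : Dk k 0 = ∞ := by simp [Dk, muP]
      rw [this]; exact le_top
    · have := Nat.find_min hex (m := m) (by omega)
      exact not_lt.1 this
  set c := (Dk k (n+1)).toReal with hc
  have hDc : Dk k (n+1) = ENNReal.ofReal c := (ENNReal.ofReal_toReal (hf n)).symm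
  have hca : c < a := by
    rw [hDc] at hn; exact (ENNReal.ofReal_lt_ofReal_iff ha).1 hn
  have hc0 : 0 ≤ c := ENNReal.toReal_nonneg
  set B := {x | k x = n} with hBdef
  have hset : tau0 k ⁻¹' Iio a = {x | n + 1 ≤ k x} ∪ (B ∩ {t | FB B t < a - c}) := by
    ext t
    simp only [mem_preimage, mem_Iio, mem_union, mem_ofPred_eq, mem_inter_iff, hBdef]
    rcases lt_trichotomy (k t) n with h | h | h
    · constructor
      · intro ht
        exfalso
        have h2 : ENNReal.ofReal a ≤ Dk k (k t + 1) := hmin.trans (Dk_anti k (by omega))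
        have h3 := (ENNReal.ofReal_le_iff_le_toReal (hf (k t))).1 h2
        have h4 : 0 ≤ FB {x | k x = k t} t := ENNReal.toReal_nonneg
        unfold tau0 at ht
        linarith
      · rintro (h' | ⟨h', -⟩) <;> omega
    · have : tau0 k t = c + FB {x | k x = n} t := by rw [tau0, h]
      rw [this]
      constructor
      · intro h'; right; exact ⟨h, by linarith⟩
      · rintro (h' | ⟨-, h'⟩)
        · omega
        · linarith
    · refine iff_of_true ?_ (Or.inl h)
      obtain ⟨m, hm⟩ : ∃ m, k t = m + 1 := ⟨k t - 1, by omega⟩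
      have h2 := tau0_le k hk h1 t m hm
      have h3 := ENNReal.toReal_mono (hf n) (Dk_anti k (show n + 1 ≤ m + 1 by omega))
      linarith
  have hBm : MeasurableSet B := hk (measurableSet_singleton n)
  rw [hset, measure_union, fill B (a - c) (by linarith)]
  · change Dk k (n+1) + _ = _
    rw [hDc, ← ENNReal.ofReal_add hc0 (by linarith)]
    congr 1; ring
  · rw [Dk_split k hk n, hDc] at hmin
    rw [ENNReal.ofReal_sub _ hc0]
    exact tsub_le_iff_left.2 hmin
  · rw [Set.disjoint_left]
    rintro x (hx : n + 1 ≤ k x) ⟨hx', -⟩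
    have : k x = n := hx'
    omega
  · exact hBm.inter ((FB_mono B).measurable measurableSet_Iio)

lemma tau0_mp (k : ℝ → ℕ) (hk : Measurable k) (h1 : Dk k 1 ≠ ∞) :
    MeasurePreserving (tau0 k) muP muP := by
  have hm := tau0_meas k hk
  refine ⟨hm, ?_⟩
  have key : ∀ a : ℝ, muP.map (tau0 k) (Iio a) = muP (Iio a) := by
    intro a
    rw [Measure.map_apply hm measurableSet_Iio, muP_Iio]
    rcases lt_or_ge 0 a with ha | ha
    · exact tau0_meas_Iio k hk h1 a ha
    · have : tau0 k ⁻¹' Iio a = ∅ := by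
        ext t
        simp only [mem_preimage, mem_Iio, mem_empty_iff_false, iff_false, not_lt]
        exact ha.trans (add_nonneg ENNReal.toReal_nonneg ENNReal.toReal_nonneg)
      rw [this, ENNReal.ofReal_of_nonpos ha, measure_empty]
  refine Measure.ext_of_generateFrom_of_iUnion (range Iio) (fun n : ℕ => Iio (n:ℝ)) ?_
    isPiSystem_Iio ?_ (fun n => mem_range_self _) ?_ ?_
  · rw [← borel_eq_generateFrom_Iio]; exact BorelSpace.measurable_eq
  · ext x; simp [exists_nat_gt x]
  · intro n; rw [key, muP_Iio]; exact ENNReal.ofReal_ne_top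
  · rintro _ ⟨a, rfl⟩; exact key a

lemma exists_null : ∃ N : Set ℝ, MeasurableSet N ∧ N ⊆ Ioi 0 ∧ volume N = 0 ∧ ¬ N.Countable := by
  refine ⟨{x | Liouville x} ∩ Ioi 0, IsGδ.setOfPred_liouville.measurableSet.inter measurableSet_Ioi,
    inter_subset_right, measure_mono_null inter_subset_left volume_setOfPred_liouville, ?_⟩
  intro hc
  have h1 : ({x | Liouville x} ∩ Ioi 0 : Set ℝ)ᶜ ∈ residual ℝ :=
    residual_of_dense_Gδ hc.isGδ_compl (hc.dense_compl ℝ)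
  have h2 := dense_of_mem_residual (Filter.inter_mem h1 eventually_residual_liouville)
  obtain ⟨x, hx, hx1, hx2⟩ := h2.inter_open_nonempty (Ioi 0) isOpen_Ioi ⟨1, by simp⟩
  exact hx1 ⟨hx2, hx⟩

lemma make_surj (σ : ℝ → ℝ) (hσ : MeasurePreserving σ muP muP) :
    ∃ τ : ℝ → ℝ, Measurable τ ∧ MapsTo τ (Ioi 0) (Ioi 0) ∧ SurjOn τ (Ioi 0) (Ioi 0) ∧
      MeasurePreserving τ muP muP ∧ τ =ᵐ[muP] σ := by
  obtain ⟨N, hNm, hN0, hNv, hNc⟩ := exists_null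
  have hI : ¬ (Ioi (0:ℝ)).Countable := fun h => hNc (h.mono hN0)
  have : StandardBorelSpace N := hNm.standardBorel
  have : StandardBorelSpace (Ioi (0:ℝ)) := measurableSet_Ioi.standardBorel
  let e : N ≃ᵐ Ioi (0:ℝ) := PolishSpace.measurableEquivOfNotCountable
    (fun h => hNc (countable_coe_iff.1 h)) (fun h => hI (countable_coe_iff.1 h))
  classical
  let τ : ℝ → ℝ := fun t => if h : t ∈ N then (e ⟨t, h⟩ : ℝ) else if 0 < σ t then σ t else 1
  have hτN : ∀ t (h : t ∈ N), τ t = e ⟨t, h⟩ := fun t h => dif_pos h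
  have hτN' : ∀ t (h : t ∉ N), τ t = if 0 < σ t then σ t else 1 := fun t h => dif_neg h
  have hτm : Measurable τ := by
    refine Measurable.dite (s := N) (f := fun x : N => (e x : ℝ))
      (g := fun x : (Nᶜ : Set ℝ) => if 0 < σ x then σ x else 1) ?_ ?_ hNm
    · exact measurable_subtype_coe.comp e.measurable
    · have hs : Measurable fun x : (Nᶜ : Set ℝ) => σ x := hσ.measurable.comp measurable_subtype_coe
      exact Measurable.ite (hs measurableSet_Ioi) hs measurable_const
  have hae : τ =ᵐ[muP] σ := by
    have hpos : ∀ᵐ t ∂muP, 0 < σ t :=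
      hσ.quasiMeasurePreserving.ae (p := fun x => 0 < x) (ae_restrict_mem measurableSet_Ioi)
    have hn : ∀ᵐ t ∂muP, t ∉ N := ae_restrict_of_ae (measure_eq_zero_iff_ae_notMem.1 hNv)
    filter_upwards [hpos, hn] with t h1 h2
    rw [hτN' t h2, if_pos h1]
  refine ⟨τ, hτm, ?_, ?_, ⟨hτm, ?_⟩, hae⟩
  · intro t _
    by_cases h : t ∈ N
    · rw [hτN t h]; exact (e ⟨t, h⟩).2
    · rw [hτN' t h]
      split_ifs with h'
      · exact h'
      · exact mem_Ioi.2 one_pos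
  · intro y hy
    refine ⟨(e.symm ⟨y, hy⟩ : N), hN0 (e.symm ⟨y, hy⟩).2, ?_⟩
    rw [hτN _ (e.symm ⟨y, hy⟩).2]
    simp
  · rw [Measure.map_congr hae, hσ.map_eq]

lemma rearr_anti (f : ℝ → ℝ) : Antitone (rearr muP f) := by
  intro s t h
  apply sInf_le_sInf
  rintro x ⟨h1, h2⟩
  exact ⟨h1, h2.trans (ENNReal.ofReal_le_ofReal h)⟩

lemma lt_ofReal_abs (c : ℝ) (hc : 0 ≤ c) (x : ℝ) :
    ENNReal.ofReal c < ENNReal.ofReal |x| ↔ c < |x| :=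
  ENNReal.ofReal_lt_ofReal_iff_of_nonneg hc

/-- If `f` is measurable on `I = (0,∞)` and its decreasing rearrangement `f*`
(w.r.t. Lebesgue measure on `(0,∞)`) tends to `α > 0` at `∞`, then for every `ε > 0` there is a
measurable, surjective, measure-preserving transformation `τ : (0,∞) → (0,∞)` with
`|f(t)| ≤ (1+ε) f*(τ(t))` for a.e. `t ∈ (0,∞)`. -/
theorem stmt_0 (f : ℝ → ℝ) (hf : Measurable f) (α : ℝ) (hα : 0 < α)
    (hlim : Tendsto (fun t => rearr (volume.restrict (Set.Ioi (0:ℝ))) f t) atTop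
      (nhds (ENNReal.ofReal α)))
    (ε : ℝ) (hε : 0 < ε) :
    ∃ τ : ℝ → ℝ, Measurable τ ∧
      Set.MapsTo τ (Set.Ioi (0:ℝ)) (Set.Ioi (0:ℝ)) ∧
      Set.SurjOn τ (Set.Ioi (0:ℝ)) (Set.Ioi (0:ℝ)) ∧
      MeasurePreserving τ (volume.restrict (Set.Ioi (0:ℝ))) (volume.restrict (Set.Ioi (0:ℝ))) ∧
      ∀ᵐ t ∂(volume.restrict (Set.Ioi (0:ℝ))),
        ENNReal.ofReal |f t| ≤
          ENNReal.ofReal (1 + ε) * rearr (volume.restrict (Set.Ioi (0:ℝ))) f (τ t) := by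
  set q := 1 + ε with hq
  have hq1 : 1 < q := by linarith
  have hq0 : 0 < q := by linarith
  have hp : ∀ x : ℝ, ∃ n : ℕ, |f x| ≤ α * q ^ (n+1) := by
    intro x
    obtain ⟨n, hn⟩ := pow_unbounded_of_one_lt (|f x| / α) hq1
    refine ⟨n, ?_⟩
    rw [div_lt_iff₀ hα] at hn
    have : q ^ n ≤ q ^ (n+1) := pow_le_pow_right₀ hq1.le (by omega)
    nlinarith
  classical
  let k : ℝ → ℕ := fun x => Nat.find (hp x)
  have hk : Measurable k := by
    apply measurable_find
    intro n
    exact measurableSet_le hf.abs measurable_const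
  have hk1 : ∀ x, |f x| ≤ α * q ^ (k x + 1) := fun x => Nat.find_spec (hp x)
  have hk2 : ∀ x n, n + 1 ≤ k x → α * q ^ (n+1) < |f x| := fun x n h =>
    not_le.1 (Nat.find_min (hp x) (m := n) h)
  have hDle : ∀ n, Dk k (n+1) ≤ muP {x | ENNReal.ofReal (α * q ^ (n+1)) < ENNReal.ofReal |f x|} := by
    intro n
    apply measure_mono
    intro x hx
    exact (lt_ofReal_abs _ (by positivity) _).2 (hk2 x n hx)
  have h1 : Dk k 1 ≠ ∞ := by
    have hlt : ENNReal.ofReal α < ENNReal.ofReal (α * q ^ (0+1)) :=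
      (ENNReal.ofReal_lt_ofReal_iff (by positivity)).2 (by simp; nlinarith)
    obtain ⟨t, ht⟩ := (hlim.eventually_lt_const hlt).exists
    obtain ⟨s, ⟨-, hs⟩, hs'⟩ := sInf_lt_iff.1 ht
    refine ne_top_of_le_ne_top (ENNReal.ofReal_ne_top (r := t)) ((hDle 0).trans (le_trans ?_ hs))
    apply measure_mono
    intro x hx
    exact hs'.trans hx
  have hσ := tau0_mp k hk h1
  obtain ⟨τ, hτm, hτ1, hτ2, hτ3, hτ4⟩ := make_surj _ hσ
  refine ⟨τ, hτm, hτ1, hτ2, hτ3, ?_⟩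
  have hne : ∀ᵐ t ∂muP, ∀ n : ℕ, tau0 k t ≠ (Dk k (n+1)).toReal := by
    rw [ae_all_iff]
    intro n
    refine hσ.quasiMeasurePreserving.ae (p := fun x => x ≠ (Dk k (n+1)).toReal) ?_
    exact ae_restrict_of_ae (Measure.ae_ne volume _)
  filter_upwards [hτ4, hne] with t ht hnt
  rw [ht]
  have hmain : ENNReal.ofReal (α * q ^ k t) ≤ rearr muP f (tau0 k t) := by
    rcases hkt : k t with _ | n
    · rw [pow_zero, mul_one]
      exact (rearr_anti f).le_of_tendsto hlim _
    · have hlt : tau0 k t < (Dk k (n+1)).toReal :=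
        lt_of_le_of_ne (tau0_le k hk h1 t n hkt) (hnt n)
      apply le_sInf
      rintro s ⟨-, hs⟩
      by_contra hc
      push Not at hc
      have h2 : Dk k (n+1) ≤ ENNReal.ofReal (tau0 k t) := by
        refine (hDle n).trans (le_trans (measure_mono ?_) hs)
        intro x hx
        exact hc.trans hx
      have h0 : 0 ≤ tau0 k t := add_nonneg ENNReal.toReal_nonneg ENNReal.toReal_nonneg
      have h3 := ENNReal.toReal_mono ENNReal.ofReal_ne_top h2
      rw [ENNReal.toReal_ofReal h0] at h3
      linarith
  calc ENNReal.ofReal |f t| ≤ ENNReal.ofReal (q * (α * q ^ k t)) := by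
        apply ENNReal.ofReal_le_ofReal
        calc _ ≤ _ := hk1 t
          _ = _ := by ring
    _ = ENNReal.ofReal q * ENNReal.ofReal (α * q ^ k t) := ENNReal.ofReal_mul hq0.le
    _ ≤ _ := by gcongr
end

section
/- For every non-negative measurable functions f, g on I=(0,a), 0<a≤∞, whose decreasing rearrangements f*, g* are finite everywhere on (0,a), it holds that ∫_I (f* − g*)₊ dm ≤ ∫_I (f − g)₊ dm, where h₊ = max{h,0} and the inequality is understood in [0,∞]. -/
open MeasureTheory Set Filter
open scoped ENNReal

theorem aux_vol (F G : ℝ≥0∞) :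
    volume {s : ℝ | 0 < s ∧ G < ENNReal.ofReal s ∧ ENNReal.ofReal s < F} = F - G := by
  rcases eq_or_ne G ∞ with rfl | hG
  · simp
  lift G to NNReal using hG
  rcases eq_or_ne F ∞ with rfl | hF
  · have : {s : ℝ | 0 < s ∧ (G : ℝ≥0∞) < ENNReal.ofReal s ∧ ENNReal.ofReal s < ∞}
        = Ioi (G : ℝ) := by
      ext s
      simp only [mem_ofPred_eq, mem_Ioi, ENNReal.ofReal_lt_top, and_true]
      rw [← ENNReal.ofReal_coe_nnreal, ENNReal.ofReal_lt_ofReal_iff']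
      have := G.2
      constructor
      · rintro ⟨_, h, _⟩; exact h
      · intro h; exact ⟨lt_of_le_of_lt this h, h, lt_of_le_of_lt this h⟩
    rw [this]; simp
  lift F to NNReal using hF
  have : {s : ℝ | 0 < s ∧ (G : ℝ≥0∞) < ENNReal.ofReal s ∧ ENNReal.ofReal s < F}
        = Ioo (G : ℝ) F := by
    ext s
    simp only [mem_ofPred_eq, mem_Ioo]
    rw [← ENNReal.ofReal_coe_nnreal, ← ENNReal.ofReal_coe_nnreal,
      ENNReal.ofReal_lt_ofReal_iff', ENNReal.ofReal_lt_ofReal_iff']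
    have := G.2
    constructor
    · rintro ⟨_, ⟨h, _⟩, h', _⟩; exact ⟨h, h'⟩
    · rintro ⟨h, h'⟩
      have h0 : 0 < s := lt_of_le_of_lt this h
      exact ⟨h0, ⟨h, h0⟩, h', h0.trans h'⟩
  rw [this, Real.volume_Ioo, ENNReal.ofReal_sub _ G.coe_nonneg]
  simp

theorem aux_vol2 (b c : ℝ≥0∞) :
    volume {t : ℝ | 0 < t ∧ b ≤ ENNReal.ofReal t ∧ ENNReal.ofReal t < c} ≤ c - b := by
  rcases eq_or_ne b ∞ with rfl | hb
  · simp
  rcases eq_or_ne c ∞ with rfl | hc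
  · rw [ENNReal.top_sub hb]; exact le_top
  lift b to NNReal using hb
  lift c to NNReal using hc
  have : {t : ℝ | 0 < t ∧ (b : ℝ≥0∞) ≤ ENNReal.ofReal t ∧ ENNReal.ofReal t < c}
      ⊆ Ico (b : ℝ) c := by
    rintro t ⟨h0, h1, h2⟩
    rw [← ENNReal.ofReal_coe_nnreal] at h1 h2
    exact ⟨(ENNReal.ofReal_le_ofReal_iff h0.le).1 h1, (ENNReal.ofReal_lt_ofReal_iff'.1 h2).1⟩
  refine (measure_mono this).trans ?_
  rw [Real.volume_Ico, ENNReal.ofReal_sub _ b.coe_nonneg]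
  simp

theorem aux_tonelli (μ : Measure ℝ) [SFinite μ] (F G : ℝ → ℝ≥0∞)
    (hF : Measurable F) (hG : Measurable G) :
    ∫⁻ x, (F x - G x) ∂μ = ∫⁻ s in Ioi (0:ℝ),
      μ {x | G x < ENNReal.ofReal s ∧ ENNReal.ofReal s < F x} := by
  have hm : MeasurableSet {p : ℝ × ℝ | 0 < p.2 ∧ G p.1 < ENNReal.ofReal p.2 ∧
      ENNReal.ofReal p.2 < F p.1} := by
    have h2 : Measurable fun p : ℝ × ℝ => ENNReal.ofReal p.2 := measurable_snd.ennreal_ofReal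
    exact (measurableSet_lt measurable_const measurable_snd).inter
      ((measurableSet_lt (hG.comp measurable_fst) h2).inter
        (measurableSet_lt h2 (hF.comp measurable_fst)))
  have e1 := Measure.prod_apply (μ := μ) (ν := (volume : Measure ℝ)) hm
  have e2 := Measure.prod_apply_symm (μ := μ) (ν := (volume : Measure ℝ)) hm
  rw [e1] at e2
  simp only [preimage_ofPred_eq, aux_vol] at e2
  rw [e2, ← lintegral_indicator measurableSet_Ioi]
  congr 1
  ext s
  by_cases hs : 0 < s <;> simp [indicator, hs]

theorem aux_tonelli2 (μ : Measure ℝ) [SFinite μ] (F G : ℝ → ℝ≥0∞)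
    (hF : Measurable F) (hG : Measurable G) :
    ∫⁻ s in Ioi (0:ℝ), μ {x | G x ≤ ENNReal.ofReal s ∧ ENNReal.ofReal s < F x}
      ≤ ∫⁻ x, (F x - G x) ∂μ := by
  have hm : MeasurableSet {p : ℝ × ℝ | 0 < p.2 ∧ G p.1 ≤ ENNReal.ofReal p.2 ∧
      ENNReal.ofReal p.2 < F p.1} := by
    have h2 : Measurable fun p : ℝ × ℝ => ENNReal.ofReal p.2 := measurable_snd.ennreal_ofReal
    exact (measurableSet_lt measurable_const measurable_snd).inter
      ((measurableSet_le (hG.comp measurable_fst) h2).inter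
        (measurableSet_lt h2 (hF.comp measurable_fst)))
  have e1 := Measure.prod_apply (μ := μ) (ν := (volume : Measure ℝ)) hm
  have e2 := Measure.prod_apply_symm (μ := μ) (ν := (volume : Measure ℝ)) hm
  rw [e1] at e2
  simp only [preimage_ofPred_eq] at e2
  refine le_trans (le_of_eq ?_) (e2.symm.le.trans (lintegral_mono fun x => aux_vol2 (G x) (F x)))
  rw [← lintegral_indicator measurableSet_Ioi]
  congr 1
  ext s
  by_cases hs : 0 < s <;> simp [indicator, hs]

theorem aux_anti (μ : Measure ℝ) (F : ℝ → ℝ≥0∞) : Antitone (rearrE μ F) := by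
  intro s t hst
  exact sInf_le_sInf fun u hu => ⟨hu.1, hu.2.trans (ENNReal.ofReal_le_ofReal hst)⟩

theorem aux_main (a : ℝ≥0∞) (F G : ℝ → ℝ≥0∞) (hF : Measurable F) (hG : Measurable G) :
    ∫⁻ t, (rearrE (volI a) F t - rearrE (volI a) G t) ∂(volI a)
      ≤ ∫⁻ x, (F x - G x) ∂(volI a) := by
  have : SFinite (volI a) := by unfold volI; infer_instance
  have hI : MeasurableSet (Iset a) :=
    (measurableSet_lt measurable_const measurable_id).inter
      (measurableSet_lt ENNReal.measurable_ofReal measurable_const)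
  set μ := volI a with hμ
  have key : ∀ s : ℝ, 0 < s →
      μ {t | rearrE μ G t < ENNReal.ofReal s ∧ ENNReal.ofReal s < rearrE μ F t}
        ≤ μ {x | G x ≤ ENNReal.ofReal s ∧ ENNReal.ofReal s < F x} := by
    intro s hs
    have h1 : μ {t | rearrE μ G t < ENNReal.ofReal s ∧ ENNReal.ofReal s < rearrE μ F t}
        ≤ μ {x | ENNReal.ofReal s < F x} - μ {x | ENNReal.ofReal s < G x} := by
      refine le_trans ?_ (aux_vol2 _ _)
      nth_rw 1 [hμ]
      unfold volI
      rw [Measure.restrict_apply' hI]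
      refine measure_mono ?_
      rintro t ⟨⟨h1, h2⟩, h3⟩
      refine ⟨h3.1, ?_, ?_⟩
      · obtain ⟨u, hu, hus⟩ := sInf_lt_iff.1 h1
        exact (measure_mono fun x hx => hus.trans hx).trans hu.2
      · by_contra hcon
        have hle : rearrE μ F t ≤ ENNReal.ofReal s :=
          sInf_le ⟨ENNReal.ofReal_pos.2 hs, not_lt.1 hcon⟩
        exact absurd hle (not_le.2 h2)
    refine h1.trans (le_measure_sdiff.trans (measure_mono ?_))
    rintro x ⟨h2, h3⟩
    exact ⟨not_lt.1 h3, h2⟩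
  rw [aux_tonelli μ _ _ (aux_anti μ F).measurable (aux_anti μ G).measurable]
  exact (setLIntegral_mono' measurableSet_Ioi key).trans (aux_tonelli2 μ F G hF hG)

/-- For non-negative measurable `f, g` on `I=(0,a)` with everywhere finite
decreasing rearrangements, `∫_I (f* − g*)₊ dm ≤ ∫_I (f − g)₊ dm` (in `[0,∞]`). -/
theorem stmt_3 (a : ℝ≥0∞) (ha : 0 < a) (f g : ℝ → ℝ)
    (hf : Measurable f) (hg : Measurable g)
    (hf0 : ∀ x ∈ Iset a, 0 ≤ f x) (hg0 : ∀ x ∈ Iset a, 0 ≤ g x)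
    (hffin : ∀ t ∈ Iset a, rearr (volI a) f t ≠ ∞)
    (hgfin : ∀ t ∈ Iset a, rearr (volI a) g t ≠ ∞) :
    ∫⁻ t in Iset a, (rearr (volI a) f t - rearr (volI a) g t)
      ≤ ∫⁻ x in Iset a, ENNReal.ofReal (f x - g x) := by
  have hI : MeasurableSet (Iset a) :=
    (measurableSet_lt measurable_const measurable_id).inter
      (measurableSet_lt ENNReal.measurable_ofReal measurable_const)
  refine (aux_main a (fun x => ENNReal.ofReal |f x|) (fun x => ENNReal.ofReal |g x|)
    hf.abs.ennreal_ofReal hg.abs.ennreal_ofReal).trans (le_of_eq ?_)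
  refine setLIntegral_congr_fun hI fun x hx => ?_
  simp only [abs_of_nonneg (hf0 x hx), abs_of_nonneg (hg0 x hx)]
  rw [ENNReal.ofReal_sub _ (hg0 x hx)]
end

section
/- For every non-negative measurable functions f, g on I=(0,a), 0<a≤∞, whose decreasing rearrangements f*, g* are finite everywhere on (0,a) and such that (f − g)₊ has locally integrable decreasing rearrangement, one has the Hardy–Littlewood submajorization (f* − g*)₊ ≺ (f − g)₊, i.e. ∫₀ˣ ((f* − g*)₊)* dm ≤ ∫₀ˣ ((f − g)₊)* dm for every x > 0, where h₊ = max{h,0}. -/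
open MeasureTheory Set Filter
open scoped ENNReal

lemma measSet_Iset (b : ℝ≥0∞) : MeasurableSet (Iset b) := by
  have : Iset b = Ioi 0 ∩ ENNReal.ofReal ⁻¹' Iio b := by ext x; simp [Iset]
  rw [this]
  exact measurableSet_Ioi.inter (ENNReal.measurable_ofReal measurableSet_Iio)

lemma vol_Iset (b : ℝ≥0∞) : volume (Iset b) = b := by
  by_cases hb : b = ∞
  · have : Iset b = Ioi 0 := by ext x; simp [Iset, hb]
    rw [this, hb, Real.volume_Ioi]
  · have : Iset b = Ioo 0 b.toReal := by
      ext x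
      simp only [Iset, mem_ofPred_eq, mem_Ioo]
      refine and_congr_right fun hx => ?_
      exact ENNReal.ofReal_lt_iff_lt_toReal hx.le hb
    rw [this, Real.volume_Ioo, sub_zero, ENNReal.ofReal_toReal hb]

lemma Iset_mono {b c : ℝ≥0∞} (h : b ≤ c) : Iset b ⊆ Iset c :=
  fun _ hx => ⟨hx.1, hx.2.trans_le h⟩

lemma vol_diff (E B : ℝ≥0∞) : volume (Iset E \ Iset B) = E - B := by
  rcases le_total E B with h | h
  · rw [sdiff_eq_empty.2 (Iset_mono h), measure_empty, tsub_eq_zero_of_le h]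
  · by_cases hB : B = ∞
    · have : E = ∞ := top_le_iff.1 (hB ▸ h)
      simp [hB, this]
    · rw [measure_sdiff (Iset_mono h) (measSet_Iset B).nullMeasurableSet (by rwa [vol_Iset]),
        vol_Iset, vol_Iset]

lemma rearrE_le_iff (μ : Measure ℝ) (f : ℝ → ℝ≥0∞) (t : ℝ) (s : ℝ≥0∞) :
    rearrE μ f t ≤ s ↔ μ {x | s < f x} ≤ ENNReal.ofReal t := by
  constructor
  · intro h
    by_cases hs : s = ∞
    · simp [hs]
    obtain ⟨u, hu, hu1, hu2⟩ := exists_seq_strictAnti_tendsto' (lt_top_iff_ne_top.2 hs)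
    have : {x | s < f x} = ⋃ n, {x | u n < f x} := by
      ext x
      simp only [mem_ofPred_eq, mem_iUnion]
      constructor
      · intro hx
        exact (hu2.eventually_lt_const hx).exists
      · rintro ⟨n, hn⟩
        exact (hu1 n).1.trans hn
    rw [this, Monotone.measure_iUnion]
    · refine iSup_le fun n => ?_
      obtain ⟨v, hv, hvn⟩ := sInf_lt_iff.1 (h.trans_lt (hu1 n).1)
      exact (measure_mono fun x hx => hvn.trans hx).trans hv.2
    · intro m n hmn x hx
      exact (hu.antitone hmn).trans_lt hx
  · intro h
    refine le_of_forall_gt_imp_ge_of_dense fun v hv => sInf_le ⟨pos_of_gt hv, ?_⟩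
    exact (measure_mono fun x hx => hv.trans hx).trans h

lemma lt_rearrE_iff (μ : Measure ℝ) (f : ℝ → ℝ≥0∞) (t : ℝ) (s : ℝ≥0∞) :
    s < rearrE μ f t ↔ ENNReal.ofReal t < μ {x | s < f x} := by
  rw [← not_le, rearrE_le_iff, not_le]

lemma rearrE_anti (μ : Measure ℝ) (f : ℝ → ℝ≥0∞) : Antitone (rearrE μ f) := by
  intro t u h
  exact sInf_le_sInf fun s hs => ⟨hs.1, hs.2.trans (ENNReal.ofReal_le_ofReal h)⟩

lemma layer (ν : Measure ℝ) [SFinite ν] (f g : ℝ → ℝ≥0∞) (hf : Measurable f)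
    (hg : Measurable g) (c : ℝ≥0∞) :
    ∫⁻ x, (f x - g x - c) ∂ν =
      ∫⁻ r in Ioi (0:ℝ), ν ({x | ENNReal.ofReal r + c < f x} \ {x | ENNReal.ofReal r < g x}) := by
  set S : Set (ℝ × ℝ) :=
    {p | ENNReal.ofReal p.2 + c < f p.1} \ {p | ENNReal.ofReal p.2 < g p.1} with hS
  have hSm : MeasurableSet S := by
    refine (measurableSet_lt ?_ ?_).diff (measurableSet_lt ?_ ?_) <;> fun_prop
  have h1 := Measure.prod_apply (μ := ν) (ν := volume.restrict (Ioi (0:ℝ))) hSm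
  have h2 := Measure.prod_apply_symm (μ := ν) (ν := volume.restrict (Ioi (0:ℝ))) hSm
  rw [h1] at h2
  refine Eq.trans ?_ h2
  refine lintegral_congr fun x => ?_
  rw [Measure.restrict_apply (measurable_prodMk_left hSm), tsub_right_comm, ← vol_diff]
  congr 1
  ext r
  simp only [Iset, hS, Set.mem_sdiff, mem_ofPred_eq, mem_inter_iff, mem_preimage, mem_Ioi,
    lt_tsub_iff_right]
  tauto

lemma level_I (μ : Measure ℝ) (f : ℝ → ℝ≥0∞) (s : ℝ≥0∞) :
    {t | s < rearrE μ f t} ∩ Ioi 0 = Iset (μ {x | s < f x}) := by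
  ext t
  simp only [Iset, mem_inter_iff, mem_ofPred_eq, lt_rearrE_iff, mem_Ioi]
  tauto

lemma volI_univ (a : ℝ≥0∞) : volI a univ = a := by
  rw [volI, Measure.restrict_apply_univ, vol_Iset]

instance (a : ℝ≥0∞) : SFinite (volI a) := by unfold volI; infer_instance

lemma key (a : ℝ≥0∞) (f g : ℝ → ℝ≥0∞) (hf : Measurable f) (hg : Measurable g) (c : ℝ≥0∞) :
    ∫⁻ t, (rearrE (volI a) f t - rearrE (volI a) g t - c) ∂(volI a) ≤
      ∫⁻ x, (f x - g x - c) ∂(volI a) := by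
  rw [layer _ _ _ (rearrE_anti _ f).measurable (rearrE_anti _ g).measurable, layer _ _ _ hf hg]
  refine lintegral_mono fun r => ?_
  refine le_trans ?_ le_measure_sdiff
  rw [← vol_diff, ← level_I, ← level_I, volI, Measure.restrict_apply' (measSet_Iset a)]
  refine measure_mono ?_
  rintro t ⟨⟨h1, h2⟩, h3⟩
  exact ⟨⟨h1, h3.1⟩, fun h => h2 h.1⟩

lemma equi (μ : Measure ℝ) [SFinite μ] (k : ℝ → ℝ≥0∞) (hk : Measurable k) (c : ℝ≥0∞) :
    ∫⁻ t in Ioi (0:ℝ), (rearrE μ k t - c) = ∫⁻ x, (k x - c) ∂μ := by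
  have h1 := layer μ k (fun _ => 0) hk measurable_const c
  have h2 := layer (volume.restrict (Ioi (0:ℝ))) (rearrE μ k) (fun _ => 0)
    (rearrE_anti _ k).measurable measurable_const c
  simp only [tsub_zero, not_lt_zero, ofPred_false, sdiff_empty] at h1 h2
  rw [h1, h2]
  refine lintegral_congr fun r => ?_
  rw [Measure.restrict_apply' measurableSet_Ioi, level_I, vol_Iset]

lemma upper (μ : Measure ℝ) [SFinite μ] (k : ℝ → ℝ≥0∞) (hk : Measurable k) (c : ℝ≥0∞) (x : ℝ) :
    ∫⁻ t in Ioo 0 x, rearrE μ k t ≤ ∫⁻ y, (k y - c) ∂μ + ∫⁻ _t in Ioo 0 x, c := by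
  rw [← equi μ k hk c]
  calc ∫⁻ t in Ioo 0 x, rearrE μ k t ≤ ∫⁻ t in Ioo 0 x, ((rearrE μ k t - c) + c) :=
        lintegral_mono fun t => le_tsub_add
    _ = (∫⁻ t in Ioo 0 x, (rearrE μ k t - c)) + ∫⁻ _t in Ioo 0 x, c :=
        lintegral_add_right _ measurable_const
    _ ≤ _ := by
        gcongr
        exact Ioo_subset_Ioi_self

lemma lower (μ : Measure ℝ) [SFinite μ] (k : ℝ → ℝ≥0∞) (hk : Measurable k) (x : ℝ) (hx : 0 < x) :
    ∫⁻ y, (k y - rearrE μ k x) ∂μ + ∫⁻ _t in Ioo 0 x, rearrE μ k x ≤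
      ∫⁻ t in Ioo 0 x, rearrE μ k t := by
  rw [← equi μ k hk]
  have h0 : ∫⁻ t in Ioi (0:ℝ), (rearrE μ k t - rearrE μ k x) =
      ∫⁻ t in Ioo 0 x, (rearrE μ k t - rearrE μ k x) := by
    rw [← Ioo_union_Ici_eq_Ioi hx, lintegral_union measurableSet_Ici]
    · rw [setLIntegral_congr_fun (g := fun _ => 0) measurableSet_Ici]
      · simp
      · intro t ht
        exact tsub_eq_zero_of_le (rearrE_anti μ k ht)
    · exact Set.disjoint_left.2 fun t h1 h2 => absurd h1.2 (not_lt.2 h2)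
  rw [h0, ← lintegral_add_right _ measurable_const]
  refine (setLIntegral_congr_fun measurableSet_Ioo fun t ht => ?_).le
  exact tsub_add_cancel_of_le (rearrE_anti μ k ht.2.le)

/-- For non-negative measurable `f, g` on `I=(0,a)` with everywhere finite
rearrangements such that `(f−g)₊` has locally integrable decreasing rearrangement, one has the
Hardy–Littlewood submajorization `(f* − g*)₊ ≺ (f − g)₊`. -/
theorem stmt_4 (a : ℝ≥0∞) (ha : 0 < a) (f g : ℝ → ℝ)
    (hf : Measurable f) (hg : Measurable g)
    (hf0 : ∀ x ∈ Iset a, 0 ≤ f x) (hg0 : ∀ x ∈ Iset a, 0 ≤ g x)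
    (hffin : ∀ t ∈ Iset a, rearr (volI a) f t ≠ ∞)
    (hgfin : ∀ t ∈ Iset a, rearr (volI a) g t ≠ ∞)
    (hloc : ∀ x : ℝ, 0 < x →
      ∫⁻ t in Set.Ioo 0 x, rearr (volI a) (fun y => max (f y - g y) 0) t ≠ ∞) :
    ∀ x : ℝ, 0 < x →
      ∫⁻ t in Set.Ioo 0 x,
          rearrE (volI a) (fun s => rearr (volI a) f s - rearr (volI a) g s) t
        ≤ ∫⁻ t in Set.Ioo 0 x, rearr (volI a) (fun y => max (f y - g y) 0) t := by
  intro x hx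
  set h : ℝ → ℝ≥0∞ := fun y => ENNReal.ofReal |max (f y - g y) 0| with hh
  have hhm : Measurable h := by fun_prop
  refine le_trans ?_ (lower (volI a) h hhm x hx)
  refine (upper (volI a) _ ((rearrE_anti _ _).measurable.sub (rearrE_anti _ _).measurable)
    (rearrE (volI a) h x) x).trans ?_
  gcongr ?_ + _
  refine (key a _ _ (by fun_prop) (by fun_prop) _).trans (le_of_eq ?_)
  refine setLIntegral_congr_fun (measSet_Iset a) fun y hy => ?_
  have e : ENNReal.ofReal |f y| - ENNReal.ofReal |g y| = h y := by
    rw [abs_of_nonneg (hf0 y hy), abs_of_nonneg (hg0 y hy), ← ENNReal.ofReal_sub _ (hg0 y hy), hh]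
    simp only [abs_of_nonneg (le_max_right (f y - g y) 0)]
    rcases le_total (f y - g y) 0 with h1 | h1
    · rw [max_eq_right h1, ENNReal.ofReal_of_nonpos h1, ENNReal.ofReal_zero]
    · rw [max_eq_left h1]
  simp only [e]
end
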